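/- Let r ≥ 0 be a real number, let x : ℕ → ℝ satisfy x t ≥ 0 for all t, and let s : ℕ → ℝ satisfy 0 ≤ s t ≤ 1 for all t. Suppose x (t+1) ≥ x t + r − s t for all t ≥ 1. If limsup_{T→∞} (1/T) ∑_{t=1}^{T} x t < ∞, then liminf_{T→∞} (1/T) ∑_{t=1}^{T} s t ≥ r. (Deterministic core of Proposition 2: if a queue whose size can decrease by at most the served amount per frame has bounded time-average size, then its long-run service rate, defined with liminf, is at least its arrival rate.) -/

import Mathlib

/-!
Since `x` loses at most a fixed amount `C` per frame, a large value `x T` keeps the following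
`K` values large, so `K * (x T - C * K) ≤ ∑ t ∈ Icc 1 (T + K), x t`. Taking `K ≈ δ T` with `δ` small
shows that `x T = o(T)` as soon as the partial sums are `o(T²)`; bounded time averages make them
even `O(T)`. Summing the dynamics gives `r * T - ∑ t ∈ Icc 1 T, s t ≤ x (T + 1) - x 1 = o(T)`, and
dividing by `T` gives the bound on the service rate.
-/

open Asymptotics Filter Finset

section SlowlyDecreasing

variable {x : ℕ → ℝ} {C : ℝ}

theorem sub_mul_le_add_of_sub_le_succ (hdec : ∀ t ≥ 1, x t - C ≤ x (t + 1)) {T : ℕ} (hT : 1 ≤ T)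
    (k : ℕ) : x T - C * k ≤ x (T + k) := by
  induction k with
  | zero => simp
  | succ k ih =>
    have hstep := hdec (T + k) (by lia)
    rw [← add_assoc]
    push_cast
    linarith

theorem mul_sub_mul_le_sum_Icc (hx : ∀ t, 0 ≤ x t) (hC : 0 ≤ C)
    (hdec : ∀ t ≥ 1, x t - C ≤ x (t + 1)) {T : ℕ} (hT : 1 ≤ T) (K : ℕ) :
    K * (x T - C * K) ≤ ∑ t ∈ Icc 1 (T + K), x t := by
  have hblock : ∀ t ∈ Ico T (T + K), x T - C * K ≤ x t := by
    intro t ht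
    obtain ⟨hTt, htK⟩ := mem_Ico.1 ht
    obtain ⟨k, rfl⟩ := Nat.exists_eq_add_of_le hTt
    have hkK : (k : ℝ) ≤ K := by exact_mod_cast (by lia : k ≤ K)
    calc x T - C * K ≤ x T - C * k := by gcongr
      _ ≤ x (T + k) := sub_mul_le_add_of_sub_le_succ hdec hT k
  calc K * (x T - C * K) ≤ ∑ t ∈ Ico T (T + K), x t := by
        simpa using card_nsmul_le_sum _ _ _ hblock
    _ ≤ ∑ t ∈ Icc 1 (T + K), x t :=
        sum_le_sum_of_subset_of_nonneg
          (fun t ht ↦ by simp only [mem_Ico, mem_Icc] at ht ⊢; lia) fun t _ _ ↦ hx t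

theorem le_mul_of_sum_Icc_le_sq (hx : ∀ t, 0 ≤ x t) (hC : 0 ≤ C)
    (hdec : ∀ t ≥ 1, x t - C ≤ x (t + 1)) {δ η : ℝ} (hδ : 0 < δ) (hδ_one : δ ≤ 1) (hη : 0 ≤ η)
    {T : ℕ} (hδT : 1 ≤ δ * T) (hsum : ∀ n ≥ T, ∑ t ∈ Icc 1 n, x t ≤ η * (n : ℝ) ^ 2) :
    x T ≤ (2 * C * δ + 9 * η / δ) * T := by
  have hT_one : (1 : ℝ) ≤ T := hδT.trans (mul_le_of_le_one_left T.cast_nonneg hδ_one)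
  set K := ⌈δ * T⌉₊
  have hK_ge : δ * T ≤ K := Nat.le_ceil _
  have hK_le : (K : ℝ) ≤ 2 * (δ * T) := by
    linarith [Nat.ceil_lt_add_one (show 0 ≤ δ * T by positivity)]
  have hK_pos : (0 : ℝ) < K := by linarith
  have hTK : (T + K : ℝ) ≤ 3 * T := by nlinarith
  have hblock : K * (x T - C * K) ≤ K * (9 * η / δ * T) := by
    calc K * (x T - C * K) ≤ ∑ t ∈ Icc 1 (T + K), x t :=
          mul_sub_mul_le_sum_Icc hx hC hdec (by exact_mod_cast hT_one) K
      _ ≤ η * (T + K : ℝ) ^ 2 := by exact_mod_cast hsum (T + K) (by lia)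
      _ ≤ η * (3 * T) ^ 2 := by gcongr
      _ = δ * T * (9 * η / δ * T) := by field_simp; ring
      _ ≤ K * (9 * η / δ * T) := by gcongr
  calc x T ≤ C * K + 9 * η / δ * T := by linarith [le_of_mul_le_mul_left hblock hK_pos]
    _ ≤ C * (2 * (δ * T)) + 9 * η / δ * T := by gcongr
    _ = (2 * C * δ + 9 * η / δ) * T := by ring

theorem isLittleO_of_sum_Icc_isLittleO_sq (hx : ∀ t, 0 ≤ x t)
    (hdec : ∀ t ≥ 1, x t - C ≤ x (t + 1))
    (hsum : (fun T : ℕ ↦ ∑ t ∈ Icc 1 T, x t) =o[atTop] fun T : ℕ ↦ (T : ℝ) ^ 2) :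
    x =o[atTop] fun T : ℕ ↦ (T : ℝ) := by
  have hdec_abs : ∀ t ≥ 1, x t - |C| ≤ x (t + 1) := fun t ht ↦
    (sub_le_sub_left (le_abs_self C) _).trans (hdec t ht)
  refine isLittleO_iff.2 fun ε hε ↦ ?_
  obtain ⟨δ, hδ, hδ_one, hCδ⟩ : ∃ δ > 0, δ ≤ 1 ∧ 4 * |C| * δ ≤ ε := by
    have hden : 0 < 4 * |C| + ε := by positivity
    refine ⟨ε / (4 * |C| + ε), by positivity, ?_, ?_⟩
    · exact (div_le_one hden).2 (by linarith [abs_nonneg C])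
    · rw [← mul_div_assoc, div_le_iff₀ hden]
      nlinarith
  have hη : 0 < ε * δ / 18 := by positivity
  have hcoeff : 2 * |C| * δ + 9 * (ε * δ / 18) / δ ≤ ε := by
    have hhalf : 9 * (ε * δ / 18) / δ = ε / 2 := by field_simp; norm_num
    linarith
  have hlarge : ∀ᶠ T : ℕ in atTop, 1 ≤ δ * T :=
    (tendsto_natCast_atTop_atTop.const_mul_atTop hδ).eventually_ge_atTop 1
  filter_upwards [hlarge, eventually_forall_ge_atTop.2 (isLittleO_iff.1 hsum hη)] with T hδT hsumT
  rw [Real.norm_of_nonneg (hx T), Real.norm_natCast]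
  calc x T ≤ (2 * |C| * δ + 9 * (ε * δ / 18) / δ) * T :=
        le_mul_of_sum_Icc_le_sq hx (abs_nonneg C) hdec_abs hδ hδ_one hη.le hδT fun n hn ↦ by
          simpa using (Real.le_norm_self _).trans (hsumT n hn)
    _ ≤ ε * T := by gcongr

end SlowlyDecreasing

theorem sum_Icc_isBigO_of_limsup_average_lt_top {x : ℕ → ℝ} (hx : ∀ t, 0 ≤ x t)
    (hlim : limsup (fun T : ℕ ↦ ((1 / T * ∑ t ∈ Icc 1 T, x t : ℝ) : EReal)) atTop < ⊤) :
    (fun T : ℕ ↦ ∑ t ∈ Icc 1 T, x t) =O[atTop] fun T : ℕ ↦ (T : ℝ) := by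
  obtain ⟨B, hB, -⟩ := EReal.lt_iff_exists_real_btwn.1 hlim
  refine IsBigO.of_bound B ?_
  filter_upwards [eventually_lt_of_limsup_lt hB, eventually_gt_atTop 0] with T havg hT
  have hT_pos : (0 : ℝ) < T := by exact_mod_cast hT
  rw [EReal.coe_lt_coe_iff, one_div_mul_eq_div, div_lt_iff₀ hT_pos] at havg
  rw [Real.norm_of_nonneg (sum_nonneg fun t _ ↦ hx t), Real.norm_of_nonneg hT_pos.le]
  exact havg.le

theorem isBoundedUnder_le_average {s : ℕ → ℝ} {C : ℝ} (hs : ∀ t, s t ≤ C) :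
    IsBoundedUnder (· ≤ ·) atTop fun T : ℕ ↦ (1 : ℝ) / T * ∑ t ∈ Icc 1 T, s t := by
  refine isBoundedUnder_of_eventually_le (a := C) ?_
  filter_upwards [eventually_gt_atTop 0] with T hT
  have hT_pos : (0 : ℝ) < T := by exact_mod_cast hT
  rw [one_div_mul_eq_div, div_le_iff₀ hT_pos, mul_comm]
  simpa using sum_le_card_nsmul (Icc 1 T) s C fun t _ ↦ hs t

section Queue

variable {r : ℝ} {x s : ℕ → ℝ}

theorem mul_sub_sum_Icc_le_sub (hdyn : ∀ t ≥ 1, x (t + 1) ≥ x t + r - s t) (T : ℕ) :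
    r * T - ∑ t ∈ Icc 1 T, s t ≤ x (T + 1) - x 1 := by
  induction T with
  | zero => simp
  | succ T ih =>
    have hstep := hdyn (T + 1) (by lia)
    rw [sum_Icc_succ_top (by lia)]
    push_cast
    linarith

theorem le_liminf_average_of_isLittleO {C : ℝ} (hs : ∀ t, s t ≤ C)
    (hdyn : ∀ t ≥ 1, x (t + 1) ≥ x t + r - s t) (hxo : x =o[atTop] fun T : ℕ ↦ (T : ℝ)) :
    r ≤ liminf (fun T : ℕ ↦ (1 : ℝ) / T * ∑ t ∈ Icc 1 T, s t) atTop := by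
  have hsucc : (fun T : ℕ ↦ ((T + 1 : ℕ) : ℝ)) =O[atTop] fun T : ℕ ↦ (T : ℝ) := by
    refine IsBigO.of_bound 2 ?_
    filter_upwards [eventually_ge_atTop 1] with T hT
    simp only [Real.norm_natCast]
    exact_mod_cast (by lia : T + 1 ≤ 2 * T)
  have hdiff : (fun T ↦ x (T + 1) - x 1) =o[atTop] fun T : ℕ ↦ (T : ℝ) :=
    ((hxo.comp_tendsto (tendsto_add_atTop_nat 1)).trans_isBigO hsucc).sub
      (isLittleO_const_id_atTop (x 1) |>.comp_tendsto tendsto_natCast_atTop_atTop)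
  have htendsto : Tendsto (fun T : ℕ ↦ r - (x (T + 1) - x 1) / T) atTop (nhds r) := by
    simpa using hdiff.tendsto_div_nhds_zero.const_sub r
  have hle : ∀ᶠ T : ℕ in atTop,
      r - (x (T + 1) - x 1) / T ≤ 1 / T * ∑ t ∈ Icc 1 T, s t := by
    filter_upwards [eventually_gt_atTop 0] with T hT
    have hT_pos : (0 : ℝ) < T := by exact_mod_cast hT
    rw [one_div_mul_eq_div, sub_le_iff_le_add, ← add_div, le_div_iff₀ hT_pos]
    linarith [mul_sub_sum_Icc_le_sub hdyn T]
  rw [← htendsto.liminf_eq]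
  exact liminf_le_liminf hle htendsto.isBoundedUnder_ge
    (isBoundedUnder_le_average hs).isCoboundedUnder_ge

end Queue

theorem stmt_3_general {r C : ℝ} {x s : ℕ → ℝ} (hx : ∀ t, 0 ≤ x t) (hs : ∀ t, s t ≤ C)
    (hdyn : ∀ t ≥ 1, x (t + 1) ≥ x t + r - s t)
    (hsum : (fun T : ℕ ↦ ∑ t ∈ Icc 1 T, x t) =o[atTop] fun T : ℕ ↦ (T : ℝ) ^ 2) :
    r ≤ liminf (fun T : ℕ ↦ (1 : ℝ) / T * ∑ t ∈ Icc 1 T, s t) atTop := by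
  have hdec : ∀ t ≥ 1, x t - (C - r) ≤ x (t + 1) := fun t ht ↦ by linarith [hdyn t ht, hs t]
  exact le_liminf_average_of_isLittleO hs hdyn (isLittleO_of_sum_Icc_isLittleO_sq hx hdec hsum)

/-- Deterministic core of Proposition 2: if a queue whose size can decrease by
at most the served amount per frame has bounded time-average size, then its
long-run service rate (defined with liminf) is at least its arrival rate. -/
theorem stmt_3 (r : ℝ) (hr : 0 ≤ r) (x s : ℕ → ℝ)
    (hx : ∀ t, 0 ≤ x t) (hs : ∀ t, 0 ≤ s t ∧ s t ≤ 1)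
    (hdyn : ∀ t ≥ 1, x (t + 1) ≥ x t + r - s t)
    (hstable : Filter.limsup
      (fun T : ℕ => (((1 : ℝ) / T * ∑ t ∈ Finset.Icc 1 T, x t : ℝ) : EReal))
      Filter.atTop < ⊤) :
    r ≤ Filter.liminf
      (fun T : ℕ => (1 : ℝ) / T * ∑ t ∈ Finset.Icc 1 T, s t) Filter.atTop := by
  have hlinear_sq : (fun T : ℕ ↦ (T : ℝ)) =o[atTop] fun T : ℕ ↦ (T : ℝ) ^ 2 := by
    simpa using (isLittleO_pow_pow_atTop_of_lt (𝕜 := ℝ) one_lt_two).natCast_atTop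
  exact stmt_3_general hx (fun t ↦ (hs t).2) hdyn
    ((sum_Icc_isBigO_of_limsup_average_lt_top hx hstable).trans_isLittleO hlinear_sq)
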